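/- Let N ≥ 3 and p > 1 with p + 1 < 2N/(N-2). Then there exist C > 0 and α₀ > 0 such that for every α ≥ α₀ there is a function u_α ∈ 𝒞 with R_{α,p}(u_α) ≤ C α^{2 - N + 2N/(p+1)}; in particular S_{α,p} ≤ C α^{2 - N + 2N/(p+1)} for all α ≥ α₀. -/

import Mathlib

open MeasureTheory Metric Set Filter

noncomputable section

abbrev E (N : ℕ) := EuclideanSpace ℝ (Fin N)

/-- The Laplacian: sum of pure second partial derivatives. -/
def lap {N : ℕ} (u : E N → ℝ) (x : E N) : ℝ :=
  ∑ i, fderiv ℝ (fun y => fderiv ℝ u y (EuclideanSpace.single i 1)) x (EuclideanSpace.single i 1)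
/-- The admissible class 𝒞: C¹ functions on the closed unit ball, vanishing on the
boundary sphere, not identically zero. -/
def memC {N : ℕ} (u : E N → ℝ) : Prop :=
  ContDiffOn ℝ 1 u (closedBall 0 1) ∧
  (∀ x : E N, ‖x‖ = 1 → u x = 0) ∧
  ∃ x ∈ closedBall (0 : E N) 1, u x ≠ 0

/-- The Rayleigh quotient R_{α,p}. -/
def ray {N : ℕ} (α p : ℝ) (u : E N → ℝ) : ℝ :=
  (∫ x in ball (0 : E N) 1, ‖gradient u x‖ ^ 2) /
    (∫ x in ball (0 : E N) 1, ‖x‖ ^ α * |u x| ^ (p + 1)) ^ (2 / (p + 1))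

/-- The ground-state level S_{α,p}. -/
def Sval (N : ℕ) (α p : ℝ) : ℝ := sInf {c | ∃ u : E N → ℝ, memC u ∧ ray α p u = c}

/-- A function is radial if its value depends only on the norm. -/
def radial {N : ℕ} (u : E N → ℝ) : Prop := ∀ x y : E N, ‖x‖ = ‖y‖ → u x = u y

/-- The radial ground-state level S^rad_{α,p}. -/
def SradVal (N : ℕ) (α p : ℝ) : ℝ :=
  sInf {c | ∃ u : E N → ℝ, memC u ∧ radial u ∧ ray α p u = c}

/-!
Fix a `C¹` profile `φ` supported in the unit ball and a unit vector `e`, and precompose `φ` with the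
homothety of centre `e` and ratio `α`. The resulting `u` lives in the ball of radius `1/α`
internally tangent to the unit sphere at `e`, hence in the annulus `1 - 2/α < ‖x‖ < 1`, where
the weight `‖x‖ ^ α` stays above `exp (-4)`. The weight therefore costs only a constant factor,
and the power of `α` comes from scaling alone: the Dirichlet integral scales like `α ^ (2 - N)`
and the integral of `|u| ^ (p + 1)` like `α ^ (-N)`.
-/

open AffineMap (homothety)
open Function Module
open scoped Gradient

section Homothety

theorem contDiff_comp_homothety {V G : Type*} [NormedAddCommGroup V] [NormedSpace ℝ V]
    [NormedAddCommGroup G] [NormedSpace ℝ G] {n : WithTop ℕ∞} {f : V → G} (hf : ContDiff ℝ n f)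
    (c : V) (r : ℝ) : ContDiff ℝ n (f ∘ homothety c r) :=
  hf.comp (ContinuousAffineMap.contDiff ⟨homothety c r, AffineMap.homothety_continuous c r⟩)

theorem gradient_comp_homothety {V : Type*} [NormedAddCommGroup V] [InnerProductSpace ℝ V]
    [CompleteSpace V] (f : V → ℝ) (c : V) (r : ℝ) (x : V) :
    ∇ (f ∘ homothety c r) x = r • ∇ f (homothety c r x) := by
  have hcomp : f ∘ homothety c r = fun y => (fun z => f (r • z + c)) (y - c) := by
    ext y
    simp [AffineMap.homothety_apply]
  have hfderiv : fderiv ℝ (f ∘ homothety c r) x = r • fderiv ℝ f (homothety c r x) := by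
    rw [hcomp, fderiv_comp_sub (f := fun z => f (r • z + c)),
      fderiv_comp_smul (f := fun z => f (z + c)),
      fderiv_comp_add_right, AffineMap.homothety_apply, vsub_eq_sub, vadd_eq_add]
  simp [gradient, hfderiv]

theorem integral_comp_homothety {V G : Type*} [NormedAddCommGroup V] [NormedSpace ℝ V]
    [FiniteDimensional ℝ V] [MeasurableSpace V] [BorelSpace V] [NormedAddCommGroup G]
    [NormedSpace ℝ G] (μ : Measure V) [μ.IsAddHaarMeasure] (f : V → G) (c : V) (r : ℝ) :
    ∫ x, f (homothety c r x) ∂μ = |(r ^ finrank ℝ V)⁻¹| • ∫ x, f x ∂μ := by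
  simp only [AffineMap.homothety_apply, vsub_eq_sub, vadd_eq_add]
  rw [integral_sub_right_eq_self (fun x => f (r • x + c)) c,
    Measure.integral_comp_smul μ (fun x => f (x + c)), integral_add_right_eq_self]

theorem preimage_homothety_unit_ball_subset_annulus {V : Type*} [NormedAddCommGroup V]
    [NormedSpace ℝ V] {e : V} (he : ‖e‖ = 1) {α : ℝ} (hα : 1 ≤ α) :
    homothety e α ⁻¹' ball 0 1 ⊆ ball 0 1 \ ball 0 (1 - 2 / α) := by
  intro x hx
  have hα₀ : 0 < α := by linarith
  have hy : ‖homothety e α x‖ < 1 := mem_ball_zero_iff.mp hx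
  have hsmul : α • x = (α - 1) • e + homothety e α x := by
    rw [AffineMap.homothety_apply, vsub_eq_sub, vadd_eq_add]
    module
  have hcentre : ‖(α - 1) • e‖ = α - 1 := by
    rw [norm_smul, he, mul_one, Real.norm_of_nonneg (by linarith)]
  have hnorm : α * ‖x‖ = ‖(α - 1) • e + homothety e α x‖ := by
    rw [← hsmul, norm_smul, Real.norm_of_nonneg hα₀.le]
  have hupper := norm_add_le ((α - 1) • e) (homothety e α x)
  have hlower := norm_sub_le_norm_add ((α - 1) • e) (homothety e α x)
  refine ⟨mem_ball_zero_iff.mpr ?_, fun hmem => ?_⟩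
  · nlinarith
  · have : α * (1 - 2 / α) = α - 2 := by field_simp
    nlinarith [mem_ball_zero_iff.mp hmem]

end Homothety

section Weight

theorem exp_neg_two_mul_le_one_sub_div_rpow {s α : ℝ} (hα : 0 < α) (hs : 0 ≤ s)
    (hsα : 2 * s ≤ α) : Real.exp (-(2 * s)) ≤ (1 - s / α) ^ α := by
  have hdiv : s / α ≤ 1 / 2 := by
    rw [div_le_iff₀ hα]
    linarith
  have hpos : 0 < 1 - s / α := by linarith
  have hsub : 0 < α - s := by linarith
  rw [Real.rpow_def_of_pos hpos, Real.exp_le_exp]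
  calc -(2 * s) ≤ (1 - (1 - s / α)⁻¹) * α := by
        have hinv : (1 - (1 - s / α)⁻¹) * α = -(s * (α / (α - s))) := by
          field_simp
          ring
        have hratio : α / (α - s) ≤ 2 := by
          rw [div_le_iff₀ hsub]
          linarith
        rw [hinv]
        nlinarith
    _ ≤ Real.log (1 - s / α) * α := by
        gcongr
        exact Real.one_sub_inv_le_log_of_pos hpos

theorem exp_mul_integral_le_setIntegral_norm_rpow_mul {V : Type*} [NormedAddCommGroup V]
    [MeasurableSpace V] [OpensMeasurableSpace V] {μ : Measure V} {f : V → ℝ} {s α : ℝ}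
    (hα : 0 < α) (hs : 0 ≤ s) (hsα : 2 * s ≤ α) (hf : Integrable f μ) (hf₀ : 0 ≤ f)
    (hsupp : support f ⊆ ball 0 1 \ ball 0 (1 - s / α)) :
    Real.exp (-(2 * s)) * ∫ x, f x ∂μ ≤ ∫ x in ball 0 1, ‖x‖ ^ α * f x ∂μ := by
  have hweight : ∀ x, Real.exp (-(2 * s)) * f x ≤ ‖x‖ ^ α * f x := by
    intro x
    by_cases hx : f x = 0
    · simp [hx]
    have hdiv : s / α ≤ 1 := by
      rw [div_le_one hα]
      linarith
    have hnorm : 1 - s / α ≤ ‖x‖ := by simpa using (hsupp hx).2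
    have hrpow := Real.rpow_le_rpow (sub_nonneg.mpr hdiv) hnorm hα.le
    exact mul_le_mul_of_nonneg_right
      ((exp_neg_two_mul_le_one_sub_div_rpow hα hs hsα).trans hrpow) (hf₀ x)
  have hint : IntegrableOn (fun x => ‖x‖ ^ α * f x) (ball 0 1) μ := by
    refine hf.integrableOn.bdd_mul (c := 1)
      (continuous_norm.measurable.pow_const α).aestronglyMeasurable ?_
    filter_upwards [ae_restrict_mem measurableSet_ball] with x hx
    rw [Real.norm_of_nonneg (by positivity)]
    exact Real.rpow_le_one (norm_nonneg x) (mem_ball_zero_iff.mp hx).le hα.le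
  have houtside : ∀ x ∉ ball (0 : V) 1, f x = 0 := fun x hx =>
    notMem_support.mp fun hfx => hx (hsupp hfx).1
  calc Real.exp (-(2 * s)) * ∫ x, f x ∂μ
      = ∫ x in ball 0 1, Real.exp (-(2 * s)) * f x ∂μ := by
        rw [integral_const_mul, setIntegral_eq_integral_of_forall_compl_eq_zero houtside]
    _ ≤ ∫ x in ball 0 1, ‖x‖ ^ α * f x ∂μ :=
        setIntegral_mono (hf.const_mul _).integrableOn hint hweight

end Weight

section CompactSupport

theorem continuous_abs_rpow {X : Type*} [TopologicalSpace X] {u : X → ℝ} {q : ℝ}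
    (hu : Continuous u) (hq : 0 ≤ q) : Continuous fun x => |u x| ^ q :=
  hu.abs.rpow_const fun _ => Or.inr hq

theorem hasCompactSupport_abs_rpow {X : Type*} [TopologicalSpace X] {u : X → ℝ} {q : ℝ}
    (hu : HasCompactSupport u) (hq : q ≠ 0) : HasCompactSupport fun x => |u x| ^ q :=
  hu.comp_left (g := fun t : ℝ => |t| ^ q) (by simp [Real.zero_rpow hq])

theorem integral_abs_rpow_pos {X : Type*} [TopologicalSpace X] [MeasurableSpace X]
    [OpensMeasurableSpace X] {μ : Measure X} [IsFiniteMeasureOnCompacts μ] [μ.IsOpenPosMeasure]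
    {u : X → ℝ} {q : ℝ} (hu : Continuous u) (hsupp : HasCompactSupport u) (hu₀ : u ≠ 0)
    (hq : 0 < q) : 0 < ∫ x, |u x| ^ q ∂μ := by
  obtain ⟨x, hx⟩ := Function.ne_iff.mp hu₀
  exact (continuous_abs_rpow hu hq.le).integral_pos_of_hasCompactSupport_nonneg_nonzero
    (hasCompactSupport_abs_rpow hsupp hq.ne') (fun _ => by positivity)
    (Real.rpow_pos_of_pos (abs_pos.mpr hx) q).ne'

theorem integrable_norm_gradient_sq {V : Type*} [NormedAddCommGroup V] [InnerProductSpace ℝ V]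
    [CompleteSpace V] [MeasurableSpace V] [OpensMeasurableSpace V] {μ : Measure V}
    [IsFiniteMeasureOnCompacts μ] {u : V → ℝ} (hu : ContDiff ℝ 1 u)
    (hsupp : HasCompactSupport u) : Integrable (fun x => ‖∇ u x‖ ^ 2) μ := by
  have hnorm : ∀ x, ‖∇ u x‖ = ‖fderiv ℝ u x‖ := fun x => by simp [gradient]
  simp only [hnorm]
  have hcont : Continuous fun x => ‖fderiv ℝ u x‖ ^ 2 :=
    (hu.continuous_fderiv one_ne_zero).norm.pow 2
  have hcompact : HasCompactSupport fun x => ‖fderiv ℝ u x‖ ^ 2 :=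
    (hsupp.fderiv (𝕜 := ℝ)).norm.comp_left (g := fun t : ℝ => t ^ 2) (zero_pow two_ne_zero)
  exact hcont.integrable_of_hasCompactSupport hcompact

theorem hasCompactSupport_of_support_subset_ball {V β : Type*} [PseudoMetricSpace V]
    [ProperSpace V] [Zero β] {u : V → β} {c : V} {r : ℝ} (hsupp : support u ⊆ ball c r) :
    HasCompactSupport u :=
  .of_support_subset_isCompact (isCompact_closedBall c r) (hsupp.trans ball_subset_closedBall)

end CompactSupport

section RayleighQuotient

variable {N : ℕ}

theorem memC_of_support_subset_ball {u : E N → ℝ} (hu : ContDiff ℝ 1 u)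
    (hsupp : support u ⊆ ball 0 1) (hu₀ : u ≠ 0) : memC u := by
  obtain ⟨x, hx⟩ := Function.ne_iff.mp hu₀
  refine ⟨hu.contDiffOn, fun y hy => notMem_support.mp fun hmem => ?_,
    x, ball_subset_closedBall (hsupp hx), hx⟩
  exact (mem_ball_zero_iff.mp (hsupp hmem)).ne hy

theorem ray_nonneg (α p : ℝ) (u : E N → ℝ) : 0 ≤ ray α p u :=
  div_nonneg (integral_nonneg fun _ => by positivity)
    (Real.rpow_nonneg (integral_nonneg fun _ => by positivity) _)

theorem Sval_le_ray {u : E N → ℝ} (hu : memC u) (α p : ℝ) : Sval N α p ≤ ray α p u := by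
  refine csInf_le ⟨0, ?_⟩ ⟨u, hu, rfl⟩
  rintro _ ⟨v, -, rfl⟩
  exact ray_nonneg α p v

end RayleighQuotient

section Concentration

variable {N : ℕ} {φ : E N → ℝ} {e : E N} {α : ℝ}

theorem support_comp_homothety_subset_annulus (hsupp : support φ ⊆ ball 0 1) (he : ‖e‖ = 1)
    (hα : 1 ≤ α) : support (φ ∘ homothety e α) ⊆ ball 0 1 \ ball 0 (1 - 2 / α) := by
  rw [support_comp_eq_preimage]
  exact (preimage_mono hsupp).trans (preimage_homothety_unit_ball_subset_annulus he hα)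

theorem memC_comp_homothety (hφ : ContDiff ℝ 1 φ) (hsupp : support φ ⊆ ball 0 1) (hφ₀ : φ ≠ 0)
    (he : ‖e‖ = 1) (hα : 1 ≤ α) : memC (φ ∘ homothety e α) := by
  refine memC_of_support_subset_ball (contDiff_comp_homothety hφ e α)
    ((support_comp_homothety_subset_annulus hsupp he hα).trans sdiff_subset) ?_
  obtain ⟨y, hy⟩ := Function.ne_iff.mp hφ₀
  have hpreimage : homothety e α (homothety e α⁻¹ y) = y := by
    rw [← AffineMap.homothety_mul_apply, mul_inv_cancel₀ (by positivity), AffineMap.homothety_one,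
      AffineMap.id_apply]
  exact Function.ne_iff.mpr ⟨homothety e α⁻¹ y, by rwa [comp_apply, hpreimage]⟩

theorem setIntegral_norm_gradient_sq_comp_homothety_le (hφ : ContDiff ℝ 1 φ)
    (hsupp : support φ ⊆ ball 0 1) (he : ‖e‖ = 1) (hα : 1 ≤ α) :
    ∫ x in ball 0 1, ‖∇ (φ ∘ homothety e α) x‖ ^ 2 ≤
      α ^ 2 * ((α ^ N)⁻¹ * ∫ x, ‖∇ φ x‖ ^ 2) := by
  have hcompact : HasCompactSupport (φ ∘ homothety e α) :=
    hasCompactSupport_of_support_subset_ball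
      ((support_comp_homothety_subset_annulus hsupp he hα).trans sdiff_subset)
  calc ∫ x in ball 0 1, ‖∇ (φ ∘ homothety e α) x‖ ^ 2
      ≤ ∫ x, ‖∇ (φ ∘ homothety e α) x‖ ^ 2 :=
        setIntegral_le_integral
          (integrable_norm_gradient_sq (contDiff_comp_homothety hφ e α) hcompact)
          (.of_forall fun _ => by positivity)
    _ = ∫ x, α ^ 2 * ‖∇ φ (homothety e α x)‖ ^ 2 := by
        simp only [gradient_comp_homothety, norm_smul, mul_pow, Real.norm_eq_abs, sq_abs]
    _ = α ^ 2 * ((α ^ N)⁻¹ * ∫ x, ‖∇ φ x‖ ^ 2) := by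
        rw [integral_const_mul, integral_comp_homothety volume (fun x => ‖∇ φ x‖ ^ 2),
          finrank_euclideanSpace_fin, abs_of_nonneg (by positivity), smul_eq_mul]

theorem le_setIntegral_norm_rpow_mul_comp_homothety (hφ : Continuous φ)
    (hsupp : support φ ⊆ ball 0 1) (he : ‖e‖ = 1) (hα : 4 ≤ α) {q : ℝ} (hq : 0 < q) :
    (α ^ N)⁻¹ * (Real.exp (-4) * ∫ x, |φ x| ^ q) ≤
      ∫ x in ball 0 1, ‖x‖ ^ α * |(φ ∘ homothety e α) x| ^ q := by
  have hannulus := support_comp_homothety_subset_annulus hsupp he (α := α) (by linarith)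
  have hcont : Continuous (φ ∘ homothety e α) := hφ.comp (AffineMap.homothety_continuous e α)
  have hcompact := hasCompactSupport_of_support_subset_ball (hannulus.trans sdiff_subset)
  have hintegrable : Integrable fun x => |(φ ∘ homothety e α) x| ^ q :=
    (continuous_abs_rpow hcont hq.le).integrable_of_hasCompactSupport
      (hasCompactSupport_abs_rpow hcompact hq.ne')
  have hannulus_rpow : support (fun x => |(φ ∘ homothety e α) x| ^ q) ⊆
      ball 0 1 \ ball 0 (1 - 2 / α) := by
    refine subset_trans (fun x hx => mem_support.mpr fun hux => hx ?_) hannulus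
    simp only [hux, abs_zero, Real.zero_rpow hq.ne']
  calc (α ^ N)⁻¹ * (Real.exp (-4) * ∫ x, |φ x| ^ q)
      = Real.exp (-(2 * 2)) * ∫ x, |(φ ∘ homothety e α) x| ^ q := by
        simp only [comp_apply]
        rw [integral_comp_homothety volume (fun x => |φ x| ^ q), finrank_euclideanSpace_fin,
          abs_of_nonneg (by positivity), smul_eq_mul, mul_left_comm,
          show (-(2 * 2) : ℝ) = -4 by norm_num]
    _ ≤ ∫ x in ball 0 1, ‖x‖ ^ α * |(φ ∘ homothety e α) x| ^ q :=
        exp_mul_integral_le_setIntegral_norm_rpow_mul (by linarith) zero_le_two (by linarith)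
          hintegrable (fun _ => by positivity) hannulus_rpow

theorem div_rpow_le_of_scaling {d : ℕ} {q A K I J : ℝ} (hα : 0 < α) (hA : 0 ≤ A) (hK : 0 < K)
    (hq : 0 ≤ q) (hI : I ≤ α ^ 2 * ((α ^ d)⁻¹ * A)) (hJ : (α ^ d)⁻¹ * K ≤ J) :
    I / J ^ q ≤ A / K ^ q * α ^ (2 - d + d * q) := by
  calc I / J ^ q ≤ α ^ 2 * ((α ^ d)⁻¹ * A) / ((α ^ d)⁻¹ * K) ^ q := by gcongr
    _ = A / K ^ q * α ^ (2 - d + d * q) := by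
        rw [Real.mul_rpow (by positivity) hK.le, Real.inv_rpow (by positivity),
          Real.rpow_add hα, Real.rpow_sub hα, Real.rpow_mul hα.le, Real.rpow_natCast,
          Real.rpow_ofNat]
        field_simp

theorem ray_comp_homothety_le (hφ : ContDiff ℝ 1 φ) (hsupp : support φ ⊆ ball 0 1) (hφ₀ : φ ≠ 0)
    (he : ‖e‖ = 1) (hα : 4 ≤ α) {p : ℝ} (hp : -1 < p) :
    ray α p (φ ∘ homothety e α) ≤
      (∫ x, ‖∇ φ x‖ ^ 2) / (Real.exp (-4) * ∫ x, |φ x| ^ (p + 1)) ^ (2 / (p + 1)) *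
        α ^ (2 - (N : ℝ) + 2 * (N : ℝ) / (p + 1)) := by
  have hq : 0 < p + 1 := by linarith
  have hmass : 0 < ∫ x, |φ x| ^ (p + 1) :=
    integral_abs_rpow_pos hφ.continuous (hasCompactSupport_of_support_subset_ball hsupp) hφ₀ hq
  rw [show 2 * (N : ℝ) / (p + 1) = N * (2 / (p + 1)) by ring]
  exact div_rpow_le_of_scaling (by linarith) (integral_nonneg fun _ => by positivity)
    (by positivity) (by positivity)
    (setIntegral_norm_gradient_sq_comp_homothety_le hφ hsupp he (by linarith))
    (le_setIntegral_norm_rpow_mul_comp_homothety hφ.continuous hsupp he hα hq)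

end Concentration

theorem stmt6_general {N : ℕ} (hN : 1 ≤ N) (p : ℝ) (hp : -1 < p) :
    ∃ C α₀ : ℝ, 0 < C ∧ 0 < α₀ ∧
      ∀ α : ℝ, α₀ ≤ α →
        (∃ u : E N → ℝ, memC u ∧
          ray α p u ≤ C * α ^ (2 - (N : ℝ) + 2 * (N : ℝ) / (p + 1))) ∧
        Sval N α p ≤ C * α ^ (2 - (N : ℝ) + 2 * (N : ℝ) / (p + 1)) := by
  have : Nonempty (Fin N) := ⟨⟨0, hN⟩⟩
  obtain ⟨e, he⟩ := exists_norm_eq (E N) zero_le_one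
  obtain ⟨φ, htsupport, -, hφ', -, hφ_zero⟩ :=
    exists_contDiff_tsupport_subset (n := 1) (ball_mem_nhds (0 : E N) one_pos)
  have hφ : ContDiff ℝ 1 φ := by simpa using hφ'
  have hsupp : support φ ⊆ ball 0 1 := (subset_tsupport φ).trans htsupport
  have hφ₀ : φ ≠ 0 := Function.ne_iff.mpr ⟨0, by simp [hφ_zero]⟩
  obtain ⟨C, hC, hray⟩ : ∃ C ≥ 0, ∀ α ≥ 4, ray α p (φ ∘ homothety e α) ≤
      C * α ^ (2 - (N : ℝ) + 2 * (N : ℝ) / (p + 1)) :=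
    ⟨_, div_nonneg (integral_nonneg fun _ => sq_nonneg _) (by positivity), fun α hα =>
      ray_comp_homothety_le hφ hsupp hφ₀ he hα hp⟩
  refine ⟨C + 1, 4, by linarith, by norm_num, fun α hα => ?_⟩
  have hu : memC (φ ∘ homothety e α) := memC_comp_homothety hφ hsupp hφ₀ he (by linarith)
  have hle : ray α p (φ ∘ homothety e α) ≤
      (C + 1) * α ^ (2 - (N : ℝ) + 2 * (N : ℝ) / (p + 1)) := by
    refine (hray α hα).trans ?_
    gcongr
    exact le_add_of_nonneg_right zero_le_one
  exact ⟨⟨_, hu, hle⟩, (Sval_le_ray hu α p).trans hle⟩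

/-- Upper bound for the ground-state level: S_{α,p} ≤ C α^{2-N+2N/(p+1)} for α large,
witnessed by test functions concentrating near the boundary. -/
theorem stmt6 {N : ℕ} (hN : 3 ≤ N) (p : ℝ) (hp : 1 < p)
    (hsub : p + 1 < 2 * (N : ℝ) / ((N : ℝ) - 2)) :
    ∃ C α₀ : ℝ, 0 < C ∧ 0 < α₀ ∧
      ∀ α : ℝ, α₀ ≤ α →
        (∃ u : E N → ℝ, memC u ∧
          ray α p u ≤ C * α ^ (2 - (N : ℝ) + 2 * (N : ℝ) / (p + 1))) ∧
        Sval N α p ≤ C * α ^ (2 - (N : ℝ) + 2 * (N : ℝ) / (p + 1)) :=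
  stmt6_general (by lia) p (by linarith)
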